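/- arXiv:2111.04387 — 2 statements merged into one kernel-verified Lean document; each statement's English description precedes it below -/
import Mathlib

section
/- Let m ≥ 3 be an odd integer. There exists a finite set of primes {p₁, p₂, ..., pₙ} such that for every odd integer t ≥ 3 that is relatively prime to p₁p₂⋯pₙ, every prime p dividing t divides the class number of ℚ(√(1 − 2m^t)). In particular, if t ≥ 3 is an odd square-free integer relatively prime to p₁p₂⋯pₙ, then t divides the class number of ℚ(√(1 − 2m^t)). -/
open Polynomial NumberField

/-- A fixed choice of complex square root of the integer `d`. -/
noncomputable def sqrtC (d : ℤ) : ℂ := (d : ℂ) ^ ((1 : ℂ) / 2)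

lemma sqrtC_sq (d : ℤ) : sqrtC d ^ 2 = (d : ℂ) := by
  unfold sqrtC
  rcases eq_or_ne (d : ℂ) 0 with h | h
  · rw [h, Complex.zero_cpow (by norm_num : (1 : ℂ) / 2 ≠ 0)]
    simp
  · rw [pow_two, ← Complex.cpow_add _ _ h]
    norm_num

lemma isIntegral_sqrtC (d : ℤ) : IsIntegral ℚ (sqrtC d) := by
  refine ⟨X ^ 2 - C (d : ℚ), monic_X_pow_sub_C _ two_ne_zero, ?_⟩
  have : (Polynomial.aeval (sqrtC d)) (X ^ 2 - C (d : ℚ)) = 0 := by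
    simp [sqrtC_sq]
  simpa [Polynomial.aeval_def] using this

/-- The (number) field `ℚ(√d)`, realized as a subfield of `ℂ`. -/
noncomputable def Qsqrt (d : ℤ) : IntermediateField ℚ ℂ :=
  IntermediateField.adjoin ℚ {sqrtC d}

instance (d : ℤ) : FiniteDimensional ℚ (Qsqrt d) :=
  IntermediateField.adjoin.finiteDimensional (isIntegral_sqrtC d)

instance (d : ℤ) : NumberField (Qsqrt d) := ⟨⟩

/-!
Write `D = 1 - 2 n ^ p` with `p` an odd prime and suppose that `p` does not divide the class number
of `ℚ(√D)`. The elements `1 - n ^ p ± √D` are coprime with product `(n ^ 2) ^ p`, and all units are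
fourth roots of unity, so `1 - n ^ p + √D = g ^ p`. Since `(1 + √D) ^ 2 = 2 (1 - n ^ p + √D)`, the
square of `2 ^ ((p - 1) / 2) (1 + √D)` is `(2 g) ^ p`, hence `2 ^ ((p - 1) / 2) (1 + √D) = z ^ p`
with `z` integral of norm `2 n`. Because `D ≡ 3 [ZMOD 4]`, we can write `z = a + √d` with integers
`a` and `d = a ^ 2 - 2 n`, and `a` is odd. Comparing real parts, `a` divides `2 ^ ((p - 1) / 2)`, so
`a = ±1` and `d = 1 - 2 n`.

It remains to exclude `Re (1 + √d) ^ p = ± 2 ^ ((p - 1) / 2)`. With `d = -1 - 4 u` we have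
`(1 + √d) ^ 4 = -4 (1 + 4 u (1 - u + √d))`, and expanding a power of the right-hand side 2-adically
gives a contradiction to `u ≠ 0`. When `p ≡ 3 [MOD 4]` this works for one sign only; the sign is
the Legendre symbol `(2 / p)`, because `Re (1 + √d) ^ p ≡ 1 [MOD p]`.

The set of exceptional primes can therefore be taken to be empty.
-/

section Binomial

variable {R : Type*} [CommSemiring R]

lemma exists_one_add_four_mul_pow_two_pow_eq (x : R) (k : ℕ) :
    ∃ c, (1 + 4 * x) ^ 2 ^ k = 1 + 2 ^ (k + 2) * x + 2 ^ (k + 3) * x ^ 2 * c := by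
  induction k with
  | zero => exact ⟨0, by ring⟩
  | succ k ih =>
    obtain ⟨c, hc⟩ := ih
    refine ⟨c + 2 ^ k * (1 + 2 * x * c) ^ 2, ?_⟩
    rw [pow_succ, pow_mul, hc]
    ring

lemma exists_one_add_four_mul_pow_eq (x : R) (k w : ℕ) :
    ∃ c, (1 + 4 * x) ^ (2 ^ k * w) = 1 + 2 ^ (k + 2) * w * x + 2 ^ (k + 3) * x ^ 2 * c := by
  obtain ⟨c, hc⟩ := exists_one_add_four_mul_pow_two_pow_eq x k
  obtain ⟨e, he⟩ := Polynomial.powAddExpansion 1 (2 ^ (k + 2) * x * (1 + 2 * x * c)) w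
  refine ⟨w * c + e * 2 ^ (k + 1) * (1 + 2 * x * c) ^ 2, ?_⟩
  calc (1 + 4 * x) ^ (2 ^ k * w)
      = (1 + 2 ^ (k + 2) * x * (1 + 2 * x * c)) ^ w := by rw [pow_mul, hc]; congr 1; ring
    _ = _ := by rw [he, one_pow, one_pow]; ring

end Binomial

section Zsqrtd

lemma zsqrtd_re_zero_mk_pow_of_odd {d : ℤ} (b : ℤ) {n : ℕ} (hn : Odd n) :
    ((⟨0, b⟩ : ℤ√d) ^ n).re = 0 := by
  obtain ⟨k, rfl⟩ := hn
  have hsq : (⟨0, b⟩ : ℤ√d) ^ 2 = ((d * b ^ 2 : ℤ) : ℤ√d) := by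
    ext <;> simp [pow_two, mul_assoc]
  rw [pow_succ, pow_mul, hsq, ← Int.cast_pow, Zsqrtd.re_smul, mul_zero]

lemma dvd_re_zsqrtd_pow_of_odd {d : ℤ} (a b : ℤ) {n : ℕ} (hn : Odd n) :
    a ∣ ((⟨a, b⟩ : ℤ√d) ^ n).re := by
  have hdvd : (a : ℤ√d) ∣ ⟨a, b⟩ ^ n - ⟨0, b⟩ ^ n := by
    convert! sub_dvd_pow_sub_pow (⟨a, b⟩ : ℤ√d) ⟨0, b⟩ n using 1
    ext <;> simp
  simpa [zsqrtd_re_zero_mk_pow_of_odd b hn] using ((Zsqrtd.intCast_dvd _ _).mp hdvd).1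

lemma re_zsqrtd_pow_prime_eq {d : ℤ} (x : ℤ√d) {p : ℕ} [Fact p.Prime] (hp : Odd p) :
    (((x ^ p).re : ℤ) : ZMod p) = x.re := by
  obtain ⟨a, b⟩ := x
  obtain ⟨y, hy⟩ := exists_add_pow_prime_eq Fact.out (a : ℤ√d) ⟨0, b⟩ (p := p)
  have hab : (⟨a, b⟩ : ℤ√d) = a + ⟨0, b⟩ := by ext <;> simp
  have hre : ((⟨a, b⟩ : ℤ√d) ^ p).re = a ^ p + p * (a * (⟨0, b⟩ * y) : ℤ√d).re := by
    rw [hab, hy, ← Int.cast_pow, ← Int.cast_natCast, mul_assoc, mul_assoc, Zsqrtd.re_add,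
      Zsqrtd.re_add, Zsqrtd.re_intCast, Zsqrtd.re_smul, zsqrtd_re_zero_mk_pow_of_odd b hp, add_zero]
  rw [hre]
  push_cast
  rw [ZMod.pow_card, CharP.cast_eq_zero, zero_mul, add_zero]

lemma abs_re_neg_mk_pow {d : ℤ} (a b : ℤ) (n : ℕ) :
    |((⟨-a, b⟩ : ℤ√d) ^ n).re| = |((⟨a, b⟩ : ℤ√d) ^ n).re| := by
  have hstar : (⟨-a, b⟩ : ℤ√d) = -star ⟨a, b⟩ := by ext <;> simp
  rcases n.even_or_odd with hn | hn
  · rw [hstar, hn.neg_pow, ← star_pow, Zsqrtd.re_star]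
  · rw [hstar, hn.neg_pow, ← star_pow, Zsqrtd.re_neg, Zsqrtd.re_star, abs_neg]

lemma one_one_zsqrtd_pow_four (u : ℤ) :
    (⟨1, 1⟩ : ℤ√(-1 - 4 * u)) ^ 4 = ((-4 : ℤ) : ℤ√(-1 - 4 * u)) * (1 + 4 * (u * ⟨1 - u, 1⟩)) := by
  ext <;> simp [pow_succ] <;> ring

lemma exists_re_one_one_pow_four_mul_add_one_eq (u : ℤ) (k w : ℕ) :
    ∃ e : ℤ, ((⟨1, 1⟩ : ℤ√(-1 - 4 * u)) ^ (4 * (2 ^ k * w) + 1)).re =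
      (-4) ^ (2 ^ k * w) * (1 + 4 * (u ^ 2 * 2 ^ k * (2 * e - 5 * w))) := by
  obtain ⟨c, hc⟩ := exists_one_add_four_mul_pow_eq ((u : ℤ√(-1 - 4 * u)) * ⟨1 - u, 1⟩) k w
  refine ⟨((⟨1 - u, 1⟩ ^ 2 * c * ⟨1, 1⟩ : ℤ√(-1 - 4 * u))).re, ?_⟩
  have hsplit : (1 + 2 ^ (k + 2) * w * (u * ⟨1 - u, 1⟩) +
      2 ^ (k + 3) * (u * ⟨1 - u, 1⟩) ^ 2 * c) * ⟨1, 1⟩ =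
      (⟨1, 1⟩ + ((2 ^ (k + 2) * w * u : ℤ) : ℤ√(-1 - 4 * u)) * (⟨1 - u, 1⟩ * ⟨1, 1⟩) +
        ((2 ^ (k + 3) * u ^ 2 : ℤ) : ℤ√(-1 - 4 * u)) * (⟨1 - u, 1⟩ ^ 2 * c * ⟨1, 1⟩)) := by
    push_cast; ring
  have hlinear : ((⟨1 - u, 1⟩ : ℤ√(-1 - 4 * u)) * ⟨1, 1⟩).re = -5 * u := by
    rw [Zsqrtd.re_mul]; ring
  rw [pow_succ, pow_mul, one_one_zsqrtd_pow_four, mul_pow, hc, ← Int.cast_pow, mul_assoc,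
    Zsqrtd.re_smul, hsplit, Zsqrtd.re_add, Zsqrtd.re_add, Zsqrtd.re_smul, Zsqrtd.re_smul, hlinear]
  ring

lemma abs_re_one_one_pow_four_mul_add_one_ne {u : ℤ} (hu : u ≠ 0) {n : ℕ} (hn : n ≠ 0) :
    |((⟨1, 1⟩ : ℤ√(-1 - 4 * u)) ^ (4 * n + 1)).re| ≠ 4 ^ n := by
  obtain ⟨k, w, hw, rfl⟩ := Nat.exists_eq_two_pow_mul_odd hn
  obtain ⟨e, he⟩ := exists_re_one_one_pow_four_mul_add_one_eq u k w
  rw [he, abs_mul, abs_pow, abs_neg, Nat.abs_ofNat]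
  intro h
  have hunit : |1 + 4 * (u ^ 2 * 2 ^ k * (2 * e - 5 * w))| = 1 :=
    mul_left_cancel₀ (pow_ne_zero (2 ^ k * w) four_ne_zero) (h.trans (mul_one _).symm)
  have hzero : u ^ 2 * 2 ^ k * (2 * e - 5 * w) = 0 := by
    rcases (abs_eq one_pos.le).mp hunit with h | h <;> lia
  have hodd : 2 * e - 5 * w ≠ 0 := by
    obtain ⟨j, rfl⟩ := hw
    lia
  simp [hu, hodd] at hzero

lemma exists_re_one_one_pow_four_mul_add_three_eq (u : ℤ) (n : ℕ) :
    ∃ e : ℤ, ((⟨1, 1⟩ : ℤ√(-1 - 4 * u)) ^ (4 * n + 3)).re =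
      (-4) ^ n * 2 * (-1 + 2 * u * (2 * e - 3)) := by
  obtain ⟨y, hy⟩ : ((4 * u : ℤ) : ℤ√(-1 - 4 * u)) ∣ (1 + 4 * (u * ⟨1 - u, 1⟩)) ^ n - 1 := by
    refine Dvd.dvd.trans ⟨⟨1 - u, 1⟩, ?_⟩ (sub_one_dvd_pow_sub_one _ n)
    push_cast; ring
  refine ⟨(y * (⟨-1 - 6 * u, 1 - 2 * u⟩ : ℤ√(-1 - 4 * u))).re, ?_⟩
  have hcube : (⟨1, 1⟩ : ℤ√(-1 - 4 * u)) ^ 3 =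
      ((2 : ℤ) : ℤ√(-1 - 4 * u)) * ⟨-1 - 6 * u, 1 - 2 * u⟩ := by
    ext <;> simp [pow_succ] <;> ring
  have hsplit : (((-4 : ℤ) : ℤ√(-1 - 4 * u)) * (1 + 4 * (u * ⟨1 - u, 1⟩))) ^ n *
      (((2 : ℤ) : ℤ√(-1 - 4 * u)) * ⟨-1 - 6 * u, 1 - 2 * u⟩) =
      (((-4) ^ n * 2 : ℤ) : ℤ√(-1 - 4 * u)) * (⟨-1 - 6 * u, 1 - 2 * u⟩ +
        ((4 * u : ℤ) : ℤ√(-1 - 4 * u)) * (y * ⟨-1 - 6 * u, 1 - 2 * u⟩)) := by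
    rw [mul_pow, eq_add_of_sub_eq hy]; push_cast; ring
  rw [pow_add, pow_mul, one_one_zsqrtd_pow_four, hcube, hsplit, Zsqrtd.re_smul, Zsqrtd.re_add,
    Zsqrtd.re_smul]
  ring

lemma re_one_one_pow_four_mul_add_three_ne {u : ℤ} (hu : u ≠ 0) (n : ℕ) :
    ((⟨1, 1⟩ : ℤ√(-1 - 4 * u)) ^ (4 * n + 3)).re ≠ (-1) ^ (n + 1) * 2 ^ (2 * n + 1) := by
  obtain ⟨e, he⟩ := exists_re_one_one_pow_four_mul_add_three_eq u n
  have hpow : (-1 : ℤ) ^ (n + 1) * 2 ^ (2 * n + 1) = (-4) ^ n * 2 * -1 := by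
    rw [pow_succ, pow_succ, pow_mul, neg_pow 4]; ring
  rw [he, hpow]
  intro h
  have hzero : 2 * u * (2 * e - 3) = 0 := by
    simpa using mul_left_cancel₀ (by positivity) h
  have hodd : 2 * e - 3 ≠ 0 := by lia
  simp [hu, hodd] at hzero

lemma two_pow_half_eq_neg_one_pow {p n : ℕ} [Fact p.Prime] (hp : p = 4 * n + 3) :
    (2 : ZMod p) ^ (p / 2) = (-1) ^ (n + 1) := by
  have hχ : ZMod.χ₈ p = (-1) ^ (n + 1) := by
    rw [ZMod.χ₈_nat_eq_if_mod_eight]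
    rcases n.even_or_odd with hn | hn
    · rw [hn.add_one.neg_one_pow, if_neg (by lia), if_neg (by grind)]
    · rw [hn.add_one.neg_one_pow, if_neg (by lia), if_pos (by grind)]
  have h := legendreSym.eq_pow p 2
  rw [legendreSym.at_two (by lia), hχ] at h
  exact_mod_cast h.symm

lemma re_one_one_pow_prime_eq_of_abs_eq {d : ℤ} {p n : ℕ} [Fact p.Prime] (hp : p = 4 * n + 3)
    (h : |((⟨1, 1⟩ : ℤ√d) ^ p).re| = 2 ^ (p / 2)) :
    ((⟨1, 1⟩ : ℤ√d) ^ p).re = (-1) ^ (n + 1) * 2 ^ (p / 2) := by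
  have : Fact (2 < p) := ⟨by lia⟩
  have hone := re_zsqrtd_pow_prime_eq (⟨1, 1⟩ : ℤ√d) (p := p) ⟨2 * n + 1, by lia⟩
  have habs : |(-1 : ℤ) ^ (n + 1) * 2 ^ (p / 2)| = 2 ^ (p / 2) := by simp [abs_mul]
  refine (abs_eq_abs.mp (h.trans habs.symm)).resolve_right fun hneg => ?_
  rw [hneg] at hone
  push_cast at hone
  rw [two_pow_half_eq_neg_one_pow hp, ← mul_pow, neg_one_mul, neg_neg, one_pow] at hone
  exact ZMod.neg_one_ne_one hone

theorem abs_re_one_one_pow_prime_ne {n : ℤ} (hn : Odd n) (hn1 : n ≠ 1) {p : ℕ} [hp : Fact p.Prime]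
    (hp_odd : Odd p) : |((⟨1, 1⟩ : ℤ√(1 - 2 * n)) ^ p).re| ≠ 2 ^ (p / 2) := by
  obtain ⟨u, rfl⟩ := hn
  rw [show 1 - 2 * (2 * u + 1) = -1 - 4 * u by ring]
  have hu : u ≠ 0 := by rintro rfl; exact hn1 rfl
  obtain ⟨k, hk | hk⟩ : ∃ k, p = 4 * k + 1 ∨ p = 4 * k + 3 := ⟨p / 4, by grind⟩
  · have hk0 : k ≠ 0 := by rintro rfl; exact hp.out.one_lt.ne' hk
    rw [show p / 2 = 2 * k by lia, pow_mul, hk]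
    exact abs_re_one_one_pow_four_mul_add_one_ne hu hk0
  · intro h
    have hre := re_one_one_pow_prime_eq_of_abs_eq hk h
    rw [show p / 2 = 2 * k + 1 by lia, hk] at hre
    exact re_one_one_pow_four_mul_add_three_ne hu k hre

theorem re_pow_prime_ne_of_norm_eq_two_mul {n : ℤ} (hn : Odd n) (hn1 : n ≠ 1) {p : ℕ}
    [Fact p.Prime] (hp : Odd p) {d a : ℤ} (hd : d % 4 = 0 ∨ d % 4 = 3)
    (hnorm : (⟨a, 1⟩ : ℤ√d).norm = 2 * n) : ((⟨a, 1⟩ : ℤ√d) ^ p).re ≠ 2 ^ (p / 2) := by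
  intro h
  obtain rfl : d = a * a - 2 * n := by rw [Zsqrtd.norm_def] at hnorm; lia
  have ha_odd : Odd a := by
    by_contra! ha
    obtain ⟨⟨b, rfl⟩, c, rfl⟩ := And.intro (Int.not_odd_iff_even.mp ha) hn
    grind
  have ha_unit : IsUnit a :=
    (Int.isCoprime_two_right.mpr ha_odd).pow_right.isUnit_of_dvd' dvd_rfl
      (h ▸ dvd_re_zsqrtd_pow_of_odd a 1 hp)
  have habs : |((⟨a, 1⟩ : ℤ√(a * a - 2 * n)) ^ p).re| = 2 ^ (p / 2) := by
    rw [h, abs_of_pos (by positivity)]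
  refine abs_re_one_one_pow_prime_ne hn hn1 hp ?_
  rcases Int.isUnit_iff.mp ha_unit with rfl | rfl
  · exact habs
  · rwa [abs_re_neg_mk_pow] at habs

end Zsqrtd

lemma isCoprime_one_sub_add_one_sub_sub {R : Type*} [CommRing R] {q s : R} (hq : Odd q)
    (hs : s ^ 2 = 1 - 2 * q) : IsCoprime (1 - q + s) (1 - q - s) := by
  obtain ⟨k, rfl⟩ := hq
  have htwo : IsCoprime 2 (2 * k + 1) := ⟨-k, 1, by ring⟩
  have hsum : IsCoprime ((1 - (2 * k + 1) + s) + (1 - (2 * k + 1) - s))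
      ((1 - (2 * k + 1) + s) * (1 - (2 * k + 1) - s)) := by
    have hsub : IsCoprime (1 - (2 * k + 1)) (2 * k + 1) := ⟨1, 1, by ring⟩
    convert! (htwo.mul_left hsub).pow_right (n := 2) using 1
    · ring
    · linear_combination -hs
  exact (IsCoprime.add_mul_left_left_iff (z := 1)).mp
    (by simpa [add_comm] using hsum.of_mul_right_right)

lemma exists_associated_pow_of_mul_eq_pow_of_isCoprime {R : Type*} [CommRing R]
    [IsDedekindDomain R] [Fintype (ClassGroup R)] {n : ℕ}
    (hn : n.Coprime (Fintype.card (ClassGroup R))) {a b c : R} (hab : IsCoprime a b)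
    (h : a * b = c ^ n) : ∃ d, Associated (d ^ n) a := by
  obtain ⟨I, hI⟩ := exists_eq_pow_of_mul_eq_pow_of_coprime
    ((Ideal.isCoprime_span_singleton_iff a b).mpr hab)
    (by rw [Ideal.span_singleton_mul_span_singleton, h, Ideal.span_singleton_pow])
  have hprincipal : (I ^ n).IsPrincipal := hI ▸ ⟨a, rfl⟩
  obtain ⟨d, rfl⟩ := Ideal.IsPrincipal.of_isPrincipal_pow_of_coprime hn hprincipal
  refine ⟨d, Ideal.span_singleton_eq_span_singleton.mp ?_⟩
  rw [hI, Ideal.submodule_span_eq, Ideal.span_singleton_pow]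

lemma re_eq_zero_of_sq_eq_ofReal {z : ℂ} {r : ℝ} (hr : r ≤ 0) (hz : z ^ 2 = r) : z.re = 0 := by
  have hre : z.re * z.re - z.im * z.im = r := by simpa [pow_two] using congrArg Complex.re hz
  have him : z.re * z.im = 0 := by
    have h : z.re * z.im + z.im * z.re = 0 := by simpa [pow_two] using congrArg Complex.im hz
    linarith
  rcases mul_eq_zero.mp him with h | h
  · exact h
  · rw [h] at hre
    nlinarith

section ZsqrtdToComplex

variable {d : ℤ} (hd : d ≤ 0) (f : ℤ√d →+* ℂ) (x : ℤ√d)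
include hd

lemma re_map_zsqrtd : (f x).re = x.re := by
  have hsqrtd : (f Zsqrtd.sqrtd).re = 0 :=
    re_eq_zero_of_sq_eq_ofReal (r := d) (by exact_mod_cast hd)
      (by rw [pow_two, ← map_mul, Zsqrtd.dmuld, map_intCast, Complex.ofReal_intCast])
  obtain ⟨a, b⟩ := x
  simp [Zsqrtd.decompose, hsqrtd]

lemma conj_map_zsqrtd : starRingEnd ℂ (f x) = f (star x) := by
  have hsum : f x + f (star x) = (2 * x.re : ℝ) := by
    have h : x + star x = ((2 * x.re : ℤ) : ℤ√d) := by ext <;> simp; ring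
    rw [← map_add, h, map_intCast]
    push_cast; rfl
  have hconj := Complex.add_conj (f x)
  rw [re_map_zsqrtd hd f x] at hconj
  exact add_left_cancel (hconj.trans hsum.symm)

lemma normSq_map_zsqrtd : Complex.normSq (f x) = x.norm := by
  have h : (Complex.normSq (f x) : ℂ) = x.norm := by
    rw [Complex.normSq_eq_conj_mul_self, conj_map_zsqrtd hd, ← map_mul, mul_comm,
      ← Zsqrtd.norm_eq_mul_conj, map_intCast]
  exact_mod_cast h

end ZsqrtdToComplex

lemma exists_eq_add_mul_sqrtC_of_mem {D : ℤ} {z : ℂ} (hz : z ∈ Qsqrt D) :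
    ∃ x y : ℚ, z = x + y * sqrtC D := by
  rw [Qsqrt, ← IntermediateField.mem_toSubalgebra,
    IntermediateField.adjoin_simple_toSubalgebra_of_isAlgebraic
      (isIntegral_sqrtC D).isAlgebraic] at hz
  induction hz using Algebra.adjoin_induction with
  | mem x hx => exact ⟨0, 1, by simpa using hx⟩
  | algebraMap r => exact ⟨r, 0, by simp⟩
  | add a b _ _ ha hb =>
    obtain ⟨x, y, rfl⟩ := ha
    obtain ⟨x', y', rfl⟩ := hb
    exact ⟨x + x', y + y', by push_cast; ring⟩
  | mul a b _ _ ha hb =>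
    obtain ⟨x, y, rfl⟩ := ha
    obtain ⟨x', y', rfl⟩ := hb
    refine ⟨x * x' + y * y' * D, x * y' + x' * y, ?_⟩
    push_cast
    linear_combination (y : ℂ) * y' * sqrtC_sq D

lemma exists_intCast_eq_of_isIntegral_ratCast {q : ℚ} (hq : IsIntegral ℤ (q : ℂ)) :
    ∃ n : ℤ, (n : ℚ) = q :=
  IsIntegrallyClosed.isIntegral_iff.mp
    ((isIntegral_algebraMap_iff (algebraMap ℚ ℂ).injective).mp hq)

lemma emod_four_eq_zero_or_three_of_mul_sq_eq {D v : ℤ} (hD : D % 4 = 3) {y : ℚ}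
    (hv : D * y ^ 2 = v) : v % 4 = 0 ∨ v % 4 = 3 := by
  have hsquare : IsSquare ((D * v : ℤ) : ℚ) := ⟨D * y, by push_cast; rw [← hv]; ring⟩
  obtain ⟨w, hw⟩ := Rat.isSquare_intCast_iff.mp hsquare
  have hmod : D % 4 * (v % 4) % 4 = w * w % 4 := by rw [← Int.mul_emod, hw]
  have hw_mod : w * w % 4 = 0 ∨ w * w % 4 = 1 := by
    rcases w.even_or_odd with ⟨c, rfl⟩ | hw_odd
    · exact .inl (by grind)
    · exact .inr (pow_two w ▸ Int.sq_mod_four_eq_one_of_odd hw_odd)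
  rw [hD] at hmod
  lia

lemma exists_trace_norm_of_isIntegral {D : ℤ} (hD : D < 0) {x y : ℚ}
    (h : IsIntegral ℤ ((x : ℂ) + y * sqrtC D)) :
    (∃ u : ℤ, (u : ℚ) = 2 * x) ∧ ∃ n : ℤ, (n : ℚ) = x ^ 2 - D * y ^ 2 := by
  have hconj : IsIntegral ℤ ((x : ℂ) - y * sqrtC D) := by
    have hre : (sqrtC D).re = 0 :=
      re_eq_zero_of_sq_eq_ofReal (r := D) (by exact_mod_cast hD.le) (by simp [sqrtC_sq])
    have hsqrtC : starRingEnd ℂ (sqrtC D) = -sqrtC D := by apply Complex.ext <;> simp [hre]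
    simpa [hsqrtC, sub_eq_add_neg] using h.map (starRingEnd ℂ).toIntAlgHom
  constructor <;> apply exists_intCast_eq_of_isIntegral_ratCast
  · convert! h.add hconj using 1
    push_cast; ring
  · convert! h.mul hconj using 1
    push_cast
    linear_combination (y : ℂ) ^ 2 * sqrtC_sq D

theorem exists_zsqrtd_ringHom_of_isIntegral {D : ℤ} (hD : D < 0) (hD4 : D % 4 = 3) {z : ℂ}
    (hz : z ∈ Qsqrt D) (hint : IsIntegral ℤ z) :
    ∃ d a : ℤ, d ≤ 0 ∧ (d % 4 = 0 ∨ d % 4 = 3) ∧ ∃ f : ℤ√d →+* ℂ, f ⟨a, 1⟩ = z := by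
  obtain ⟨x, y, rfl⟩ := exists_eq_add_mul_sqrtC_of_mem hz
  obtain ⟨⟨u, hu⟩, n, hn⟩ := exists_trace_norm_of_isIntegral hD hint
  have hu_even : Even u := by
    have h : D * (2 * y) ^ 2 = ((u ^ 2 - 4 * n : ℤ) : ℚ) := by
      push_cast; rw [hu, hn]; ring
    by_contra hu_odd
    have hsq := Int.sq_mod_four_eq_one_of_odd (Int.not_even_iff_odd.mp hu_odd)
    have hmod := emod_four_eq_zero_or_three_of_mul_sq_eq hD4 h
    lia
  obtain ⟨a, rfl⟩ := hu_even
  obtain rfl : (a : ℚ) = x := by push_cast at hu; linarith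
  have hd : D * y ^ 2 = ((a ^ 2 - n : ℤ) : ℚ) := by push_cast; rw [hn]; ring
  have hd_nonpos : ((a ^ 2 - n : ℤ) : ℚ) ≤ 0 :=
    hd ▸ mul_nonpos_of_nonpos_of_nonneg (by exact_mod_cast hD.le) (sq_nonneg y)
  refine ⟨a ^ 2 - n, a, by exact_mod_cast hd_nonpos,
    emod_four_eq_zero_or_three_of_mul_sq_eq hD4 hd, Zsqrtd.lift ⟨y * sqrtC D, ?_⟩, by simp⟩
  rw [← pow_two, mul_pow, sqrtC_sq, mul_comm]
  exact_mod_cast hd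

lemma pow_four_eq_one_of_mul_eq_one {D : ℤ} (hD : D < 0) (hD4 : D % 4 = 3) {z w : ℂ}
    (hz : z ∈ Qsqrt D) (hw : w ∈ Qsqrt D) (hz_int : IsIntegral ℤ z) (hw_int : IsIntegral ℤ w)
    (hzw : z * w = 1) : z ^ 4 = 1 := by
  obtain ⟨d, a, hd, -, f, rfl⟩ := exists_zsqrtd_ringHom_of_isIntegral hD hD4 hz hz_int
  obtain ⟨e, b, he, -, g, rfl⟩ := exists_zsqrtd_ringHom_of_isIntegral hD hD4 hw hw_int
  have hnorm : (⟨a, 1⟩ : ℤ√d).norm = 1 := by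
    have h := congrArg Complex.normSq hzw
    rw [map_mul, normSq_map_zsqrtd hd, normSq_map_zsqrtd he, map_one] at h
    exact Int.eq_one_of_mul_eq_one_right (Zsqrtd.norm_nonneg hd _) (by exact_mod_cast h)
  obtain rfl : d = a ^ 2 - 1 := by rw [Zsqrtd.norm_def] at hnorm; lia
  have hsq : f Zsqrtd.sqrtd ^ 2 = a ^ 2 - 1 := by
    rw [pow_two, ← map_mul, Zsqrtd.dmuld, map_intCast]
    push_cast; rfl
  rw [Zsqrtd.decompose, map_add, map_intCast, Int.cast_one, mul_one]
  obtain rfl | ha := eq_or_ne a 0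
  · rw [Int.cast_zero] at hsq ⊢
    linear_combination (f Zsqrtd.sqrtd ^ 2 - 1) * hsq
  · have ha_sq : (a : ℂ) ^ 2 = 1 := by
      have h : a ^ 2 = 1 := by have := sq_pos_iff.mpr ha; lia
      exact_mod_cast h
    rw [ha_sq, sub_self, sq_eq_zero_iff] at hsq
    rw [hsq, add_zero, show 4 = 2 * 2 from rfl, pow_mul, ha_sq, one_pow]

lemma one_sub_two_mul_neg_and_emod_four {q : ℤ} (hq1 : 1 < q) (hq : Odd q) :
    1 - 2 * q < 0 ∧ (1 - 2 * q) % 4 = 3 := by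
  grind

lemma pow_ne_two_pow_mul_one_add_sqrtC {n : ℤ} (hn1 : 1 < n) (hn : Odd n) {p : ℕ}
    [hp : Fact p.Prime] (hp_odd : Odd p) {z : ℂ} (hz : z ∈ Qsqrt (1 - 2 * n ^ p))
    (hint : IsIntegral ℤ z) : z ^ p ≠ 2 ^ (p / 2) * (1 + sqrtC (1 - 2 * n ^ p)) := by
  intro h
  obtain ⟨hD, hD4⟩ := one_sub_two_mul_neg_and_emod_four (one_lt_pow₀ hn1 hp.out.ne_zero) hn.pow
  obtain ⟨d, a, hd, hd4, f, rfl⟩ := exists_zsqrtd_ringHom_of_isIntegral hD hD4 hz hint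
  let g : ℤ√(1 - 2 * n ^ p) →+* ℂ := Zsqrtd.lift ⟨sqrtC _, by rw [← pow_two, sqrtC_sq]⟩
  have hfg : f (⟨a, 1⟩ ^ p) = g ((2 ^ (p / 2) : ℤ) * ⟨1, 1⟩) := by
    rw [map_pow, h, map_mul, map_intCast]
    simp [g]
  have hre : ((⟨a, 1⟩ : ℤ√d) ^ p).re = 2 ^ (p / 2) := by
    have h := congrArg Complex.re hfg
    rw [re_map_zsqrtd hd, re_map_zsqrtd hD.le, Zsqrtd.re_smul, mul_one] at h
    exact_mod_cast h
  have hnorm : (⟨a, 1⟩ : ℤ√d).norm = 2 * n := by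
    have h := congrArg Complex.normSq hfg
    rw [normSq_map_zsqrtd hd, normSq_map_zsqrtd hD.le, Zsqrtd.norm_mul, Zsqrtd.norm_intCast] at h
    refine hp_odd.pow_inj.mp ?_
    calc (⟨a, 1⟩ : ℤ√d).norm ^ p = ((⟨a, 1⟩ : ℤ√d) ^ p).norm :=
          (map_pow Zsqrtd.normMonoidHom _ p).symm
      _ = 2 ^ (p / 2) * 2 ^ (p / 2) * (⟨1, 1⟩ : ℤ√(1 - 2 * n ^ p)).norm := by exact_mod_cast h
      _ = 2 ^ (2 * (p / 2) + 1) * n ^ p := by rw [Zsqrtd.norm_def]; ring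
      _ = (2 * n) ^ p := by rw [Nat.two_mul_div_two_add_one_of_odd hp_odd, mul_pow]
  exact re_pow_prime_ne_of_norm_eq_two_mul hn hn1.ne' hp_odd hd4 hnorm hre

lemma exists_ringOfIntegers_coe_eq_sqrtC (D : ℤ) :
    ∃ s : 𝓞 (Qsqrt D), ((s : Qsqrt D) : ℂ) = sqrtC D ∧ s ^ 2 = D := by
  let r : Qsqrt D := ⟨sqrtC D, IntermediateField.mem_adjoin_simple_self ℚ _⟩
  have hr : r ^ 2 = D := Subtype.ext (by simpa using sqrtC_sq D)
  have hr_int : IsIntegral ℤ r := by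
    refine .of_pow two_pos ?_
    rw [hr]
    simpa using isIntegral_algebraMap (R := ℤ) (A := Qsqrt D) (x := D)
  exact ⟨⟨r, hr_int⟩, rfl, RingOfIntegers.ext (by exact hr)⟩

lemma units_pow_four_eq_one {D : ℤ} (hD : D < 0) (hD4 : D % 4 = 3) (η : (𝓞 (Qsqrt D))ˣ) :
    η ^ 4 = 1 := by
  have hmul : (((η : 𝓞 (Qsqrt D)) : Qsqrt D) : ℂ) * ((↑η⁻¹ : 𝓞 (Qsqrt D)) : Qsqrt D) = 1 := by
    exact_mod_cast congrArg (algebraMap (𝓞 (Qsqrt D)) (Qsqrt D)) η.mul_inv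
  have hint (x : 𝓞 (Qsqrt D)) : IsIntegral ℤ ((x : Qsqrt D) : ℂ) :=
    (RingOfIntegers.isIntegral_coe x).algebraMap
  have h := pow_four_eq_one_of_mul_eq_one hD hD4 (SetLike.coe_mem _) (SetLike.coe_mem _)
    (hint _) (hint _) hmul
  exact Units.ext (RingOfIntegers.ext (Subtype.ext (by simpa using h)))

lemma pow_pow_eq_self_of_pow_four_eq_one {M : Type*} [Monoid M] {x : M} (hx : x ^ 4 = 1) {n : ℕ}
    (hn : Odd n) : (x ^ n) ^ n = x := by
  obtain ⟨k, rfl⟩ := hn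
  rw [← pow_mul, show (2 * k + 1) * (2 * k + 1) = 4 * (k * k + k) + 1 by ring, pow_succ, pow_mul,
    hx, one_pow, one_mul]

lemma exists_pow_eq_one_sub_pow_add_sqrt {n : ℤ} (hn1 : 1 < n) (hn : Odd n) {p : ℕ}
    (hp : Odd p) (hcop : p.Coprime (classNumber (Qsqrt (1 - 2 * n ^ p))))
    {s : 𝓞 (Qsqrt (1 - 2 * n ^ p))} (hs : s ^ 2 = (1 - 2 * n ^ p : ℤ)) :
    ∃ g, g ^ p = 1 - (n : 𝓞 (Qsqrt (1 - 2 * n ^ p))) ^ p + s := by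
  obtain ⟨hD, hD4⟩ := one_sub_two_mul_neg_and_emod_four (one_lt_pow₀ hn1 hp.pos.ne') hn.pow
  push_cast at hs
  have hodd : Odd ((n : 𝓞 (Qsqrt (1 - 2 * n ^ p))) ^ p) := by exact_mod_cast hn.intCast.pow
  obtain ⟨d, η, hη⟩ := exists_associated_pow_of_mul_eq_pow_of_isCoprime hcop
    (isCoprime_one_sub_add_one_sub_sub hodd hs) (c := (n : 𝓞 (Qsqrt (1 - 2 * n ^ p))) ^ 2)
    (by rw [pow_right_comm]; linear_combination -hs)
  have hη_pow : (η ^ p) ^ p = η :=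
    pow_pow_eq_self_of_pow_four_eq_one (units_pow_four_eq_one hD hD4 η) hp
  exact ⟨d * ↑(η ^ p), by rw [mul_pow, ← Units.val_pow_eq_pow_val, hη_pow, hη]⟩

lemma two_pow_half_mul_one_add_sq_eq {R : Type*} [CommRing R] {q s g : R} {p : ℕ} (hp : Odd p)
    (hs : s ^ 2 = 1 - 2 * q) (hg : g ^ p = 1 - q + s) :
    (2 ^ (p / 2) * (1 + s)) ^ 2 = (2 * g) ^ p := by
  calc (2 ^ (p / 2) * (1 + s)) ^ 2 = 2 ^ (2 * (p / 2) + 1) * (1 - q + s) := by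
        linear_combination (2 ^ (p / 2)) ^ 2 * hs
    _ = (2 * g) ^ p := by rw [Nat.two_mul_div_two_add_one_of_odd hp, mul_pow, hg]

theorem prime_dvd_classNumber_Qsqrt {n : ℤ} (hn1 : 1 < n) (hn : Odd n) {p : ℕ} [hp : Fact p.Prime]
    (hp_odd : Odd p) : p ∣ classNumber (Qsqrt (1 - 2 * n ^ p)) := by
  by_contra hdvd
  obtain ⟨s, hs, hs_sq⟩ := exists_ringOfIntegers_coe_eq_sqrtC (1 - 2 * n ^ p)
  obtain ⟨g, hg⟩ := exists_pow_eq_one_sub_pow_add_sqrt hn1 hn hp_odd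
    ((Nat.Prime.coprime_iff_not_dvd hp.out).mpr hdvd) hs_sq
  have hpow := two_pow_half_mul_one_add_sq_eq (s := (s : Qsqrt (1 - 2 * n ^ p))) hp_odd
    (by rw [← map_pow, hs_sq, map_intCast]; push_cast; rfl)
    (by simpa using congrArg (algebraMap _ (Qsqrt (1 - 2 * n ^ p))) hg)
  obtain ⟨c, hc, hc_sq⟩ :=
    (pow_eq_pow_iff_of_coprime (Nat.coprime_two_left.mpr hp_odd)).mp hpow
  have hc_int : IsIntegral ℤ c := .of_pow two_pos (hc_sq ▸ RingOfIntegers.isIntegral_coe (2 * g))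
  refine pow_ne_two_pow_mul_one_add_sqrtC hn1 hn hp_odd c.2 hc_int.algebraMap ?_
  rw [← hs]
  exact congrArg Subtype.val hc.symm

theorem exceptional_primes_finite_and_t_dvd_classNumber_general {m : ℤ} (hm : 1 < m)
    (hmodd : Odd m) {t n : ℕ} (ht : t ≠ 0) (hn : Squarefree n) (hnodd : Odd n) (hnt : n ∣ t) :
    n ∣ classNumber (Qsqrt (1 - 2 * m ^ t)) := by
  rw [← Nat.prod_primeFactors_of_squarefree hn]
  refine Finset.prod_primes_dvd _ (fun p hp ↦ (Nat.prime_of_mem_primeFactors hp).prime)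
    fun p hp ↦ ?_
  have : Fact p.Prime := ⟨Nat.prime_of_mem_primeFactors hp⟩
  have hpn : p ∣ n := Nat.dvd_of_mem_primeFactors hp
  obtain ⟨k, rfl⟩ := hpn.trans hnt
  rw [pow_mul']
  exact prime_dvd_classNumber_Qsqrt (one_lt_pow₀ hm (right_ne_zero_of_mul ht)) hmodd.pow
    (hnodd.of_dvd_nat hpn)

/-- For an odd integer `m ≥ 3` there is a finite set of primes `p₁, …, pₙ` such that for every
odd integer `t ≥ 3` coprime to `p₁ ⋯ pₙ`, every prime `p ∣ t` divides the class number of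
`ℚ(√(1 - 2 m ^ t))`; in particular if moreover `t` is square-free then `t` divides this
class number. -/
theorem exceptional_primes_finite_and_t_dvd_classNumber
    (m : ℤ) (hm : 3 ≤ m) (hmodd : Odd m) :
    ∃ S : Finset ℕ, (∀ p ∈ S, p.Prime) ∧
      ∀ t : ℕ, 3 ≤ t → Odd t → Nat.Coprime t (∏ p ∈ S, p) →
        (∀ p : ℕ, p.Prime → p ∣ t →
          p ∣ NumberField.classNumber (Qsqrt (1 - 2 * m ^ t))) ∧
        (Squarefree t → t ∣ NumberField.classNumber (Qsqrt (1 - 2 * m ^ t))) := by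
  refine ⟨∅, by simp, fun t ht htodd _ ↦ ?_⟩
  have hdvd {n : ℕ} (hn : Squarefree n) (hnt : n ∣ t) :=
    exceptional_primes_finite_and_t_dvd_classNumber_general (by lia : 1 < m) hmodd (by lia) hn
      (htodd.of_dvd_nat hnt) hnt
  exact ⟨fun p hp ↦ hdvd hp.squarefree, fun hsq ↦ hdvd hsq dvd_rfl⟩
end

section
/- Let m ≥ 3 be an odd integer and let t ≥ 3 be an odd integer such that 2m^t − 1 is a square-free integer. Then every prime p dividing t divides the class number of ℚ(√(1 − 2m^t)). In particular, if in addition t is square-free, then t divides the class number of ℚ(√(1 − 2m^t)). -/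
open Polynomial NumberField

/-!
Put `M = m ^ t` and `d = 1 - 2 * M`. As `M` is odd, `d ≡ 3 [ZMOD 4]`, so the ring of integers of
`ℚ(√d)` is `ℤ[√d]`. In it, `z = 1 - M + √d` has norm `M ^ 2` and is coprime to its conjugate, so
`(z) = 𝔞 ^ t` for some ideal `𝔞`. If the class of `𝔞` had order smaller than `t`, then `z` would be
a proper power `γ ^ n` up to a unit. As `√d` has coefficient `1` in `z`, such a `γ` is not in `ℤ`,
so it has norm at least `-d = 2 * M - 1 > M`, and its `n`-th power has norm larger than `M ^ 2`.
Hence the class of `𝔞` has order exactly `t`.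
-/

section Dedekind

variable {R : Type*} [CommRing R] [IsDedekindDomain R]

open nonZeroDivisors in
lemma orderOf_mk0_eq_of_span_singleton_eq_pow {I : (Ideal R)⁰} {α : R} {t : ℕ} (ht : t ≠ 0)
    (hI : Ideal.span {α} = (I : Ideal R) ^ t)
    (hα : ∀ p : ℕ, p.Prime → p ∣ t → ∀ γ : R, ¬ Associated (γ ^ p) α) :
    orderOf (ClassGroup.mk0 I) = t := by
  have mk0_pow_eq_one_iff (k : ℕ) :
      ClassGroup.mk0 I ^ k = 1 ↔ ((I : Ideal R) ^ k).IsPrincipal := by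
    rw [← map_pow, ClassGroup.mk0_eq_one_iff, SubmonoidClass.coe_pow]
  refine orderOf_eq_of_pow_and_pow_div_prime ht.pos ?_ fun p hp hpt hone ↦ ?_
  · exact (mk0_pow_eq_one_iff t).2 ⟨α, hI.symm⟩
  · obtain ⟨γ, hγ⟩ := (mk0_pow_eq_one_iff _).1 hone
    rw [Ideal.submodule_span_eq] at hγ
    refine hα p hp hpt γ (Ideal.span_singleton_eq_span_singleton.1 ?_)
    rw [← Ideal.span_singleton_pow, ← hγ, ← pow_mul, Nat.div_mul_cancel hpt, hI]

lemma exists_classGroup_orderOf_eq_of_mul_eq_pow {α β c : R} {t : ℕ} (ht : t ≠ 0) (hα₀ : α ≠ 0)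
    (hαβ : IsCoprime α β) (hmul : α * β = c ^ t)
    (hα : ∀ p : ℕ, p.Prime → p ∣ t → ∀ γ : R, ¬ Associated (γ ^ p) α) :
    ∃ x : ClassGroup R, orderOf x = t := by
  have hspan : Ideal.span {α} * Ideal.span {β} = Ideal.span {c} ^ t := by
    rw [Ideal.span_singleton_mul_span_singleton, hmul, Ideal.span_singleton_pow]
  obtain ⟨I, hI⟩ := exists_eq_pow_of_mul_eq_pow_of_coprime
    ((Ideal.isCoprime_span_singleton_iff α β).2 hαβ) hspan
  have hI₀ : I ≠ 0 := by
    rintro rfl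
    exact hα₀ (Ideal.span_singleton_eq_bot.1 (hI.trans (zero_pow ht)))
  exact ⟨ClassGroup.mk0 ⟨I, mem_nonZeroDivisors_of_ne_zero hI₀⟩,
    orderOf_mk0_eq_of_span_singleton_eq_pow ht hI hα⟩

end Dedekind

section Zsqrtd

variable {d : ℤ} {z : ℤ√d}

lemma isCoprime_star_of_isCoprime_norm_two_mul_re (hz : IsCoprime z.norm (2 * z.re)) :
    IsCoprime z (star z) := by
  obtain ⟨u, v, huv⟩ := hz
  have hnorm : (z.norm : ℤ√d) = z * star z := z.norm_eq_mul_conj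
  have htrace : ((2 * z.re : ℤ) : ℤ√d) = z + star z := by ext <;> simp; ring
  have hone : (u : ℤ√d) * (z * star z) + v * (z + star z) = 1 := by
    rw [← hnorm, ← htrace]
    exact_mod_cast congrArg (Int.cast : ℤ → ℤ√d) huv
  exact ⟨u * star z + v, v, by linear_combination hone⟩

lemma neg_le_norm_of_im_ne_zero (hd : d ≤ 0) (hz : z.im ≠ 0) : -d ≤ z.norm := by
  rw [Zsqrtd.norm_def]
  nlinarith [mul_self_nonneg z.re, mul_self_pos.2 hz]

lemma isUnit_of_dvd_of_im_eq_zero {γ : ℤ√d} (hγ : γ.im = 0) (hz : IsUnit z.im) (h : γ ∣ z) :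
    IsUnit γ := by
  have hγ_eq : γ = (γ.re : ℤ√d) := by ext <;> simp [hγ]
  rw [hγ_eq, Zsqrtd.intCast_dvd] at h
  rw [hγ_eq]
  exact (isUnit_of_dvd_unit h.2 hz).map (Int.castRingHom (ℤ√d))

lemma not_associated_pow_of_norm_lt_sq (hd : d ≤ 0) (hz : IsUnit z.im) (hlt : z.norm < d ^ 2)
    {n : ℕ} (hn : 2 ≤ n) (γ : ℤ√d) : ¬ Associated (γ ^ n) z := by
  intro h
  have hnorm_z : -d ≤ z.norm := neg_le_norm_of_im_ne_zero hd hz.ne_zero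
  have hnorm : γ.norm ^ n = z.norm := by
    rw [← Zsqrtd.norm_eq_of_associated hd h]
    exact (map_pow Zsqrtd.normMonoidHom γ n).symm
  by_cases hγ : γ.im = 0
  · have hγ_unit : IsUnit γ :=
      isUnit_of_dvd_of_im_eq_zero hγ hz ((dvd_pow_self γ (by lia)).trans h.dvd)
    rw [(Zsqrtd.norm_eq_one_iff' hd γ).2 hγ_unit, one_pow] at hnorm
    nlinarith
  · have hnorm_γ : -d ≤ γ.norm := neg_le_norm_of_im_ne_zero hd hγ
    have hd_neg : d < 0 := hd.lt_of_ne fun hd₀ ↦ by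
      subst hd₀
      linarith
    have hsq_le : d ^ 2 ≤ z.norm := calc
      d ^ 2 = (-d) ^ 2 := (neg_sq d).symm
      _ ≤ γ.norm ^ 2 := pow_le_pow_left₀ (by lia) hnorm_γ 2
      _ ≤ γ.norm ^ n := pow_le_pow_right₀ (by lia) hn
      _ = z.norm := hnorm
    exact hsq_le.not_gt hlt

end Zsqrtd

section IntegerRing

lemma isInteger_of_squarefree_of_isInteger_mul_sq {R K : Type*} [CommRing R] [IsDomain R]
    [UniqueFactorizationMonoid R] [Field K] [Algebra R K] [IsFractionRing R K] {d : R} {q : K}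
    (hd : Squarefree d) (h : IsLocalization.IsInteger R (algebraMap R K d * q ^ 2)) :
    IsLocalization.IsInteger R q := by
  obtain ⟨n, hn⟩ := h
  let a : R := IsFractionRing.num R q
  let b : R := (IsFractionRing.den R q : R)
  have hq : q * algebraMap R K b = algebraMap R K a :=
    IsFractionRing.num_mul_den_eq_num_iff_eq.2 rfl
  have hdn : d * a ^ 2 = n * b ^ 2 := by
    apply IsFractionRing.injective R K
    simp only [map_mul, map_pow, hn, ← hq]
    ring
  have hab : IsRelPrime (b ^ 2) (a ^ 2) := (IsFractionRing.num_den_reduced R q).symm.pow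
  have hbd : b * b ∣ d := by
    rw [← sq]
    exact hab.dvd_of_dvd_mul_right (Dvd.intro_left n hdn.symm)
  exact IsFractionRing.isInteger_of_isUnit_den (hd b hbd)

lemma even_and_even_of_four_dvd_sq_sub_mul_sq {d x y : ℤ} (hd₀ : ¬ 4 ∣ d) (hd₁ : d % 4 ≠ 1)
    (h : 4 ∣ x ^ 2 - d * y ^ 2) : Even x ∧ Even y := by
  have hxy : x ^ 2 ≡ d * y ^ 2 [ZMOD 4] := (Int.modEq_iff_dvd.2 h).symm
  rcases Int.even_or_odd y with hy | hy
  · have hy_sq : Even (d * y ^ 2) := (hy.pow_of_ne_zero two_ne_zero).mul_left d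
    have hxy_two : x ^ 2 ≡ d * y ^ 2 [ZMOD 2] := hxy.of_dvd (by norm_num)
    have hx_sq : Even (x ^ 2) := Int.even_iff.2 (hxy_two.eq.trans (Int.even_iff.1 hy_sq))
    exact ⟨(Int.even_pow.1 hx_sq).1, hy⟩
  · exfalso
    have hy_sq : y ^ 2 ≡ 1 [ZMOD 4] := Int.sq_mod_four_eq_one_of_odd hy
    have hxd : x ^ 2 ≡ d [ZMOD 4] := by simpa using hxy.trans (hy_sq.mul_left d)
    rcases Int.even_or_odd x with hx | hx
    · exact hd₀ (hxd.dvd_iff.1 (by simpa using pow_dvd_pow_of_dvd hx.two_dvd 2))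
    · have hx_sq : x ^ 2 ≡ 1 [ZMOD 4] := Int.sq_mod_four_eq_one_of_odd hx
      exact hd₁ (hxd.symm.trans hx_sq)

lemma not_isSquare_of_squarefree {d : ℤ} (hd : Squarefree d) (hd₁ : d ≠ 1) : ¬ IsSquare d := by
  rintro ⟨n, rfl⟩
  exact hd₁ (Int.isUnit_mul_self (hd n dvd_rfl))

lemma isIntegral_star {A : Type*} [CommRing A] [StarRing A] {x : A} (hx : IsIntegral ℤ x) :
    IsIntegral ℤ (star x) :=
  hx.map (starRingEnd A).toIntAlgHom

section QuadraticAlgebra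

variable {R : Type*} [CommRing R] {a b : R} {z : QuadraticAlgebra R a b}

lemma isIntegral_quadraticAlgebra_trace (hz : IsIntegral ℤ z) : IsIntegral ℤ z.trace := by
  refine (isIntegral_algebraMap_iff (B := QuadraticAlgebra R a b)
    QuadraticAlgebra.algebraMap_injective).1 ?_
  rw [QuadraticAlgebra.algebraMap_trace_eq_add_star]
  exact hz.add (isIntegral_star hz)

lemma isIntegral_quadraticAlgebra_norm (hz : IsIntegral ℤ z) : IsIntegral ℤ z.norm := by
  refine (isIntegral_algebraMap_iff (B := QuadraticAlgebra R a b)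
    QuadraticAlgebra.algebraMap_injective).1 ?_
  rw [QuadraticAlgebra.algebraMap_norm_eq_mul_star]
  exact hz.mul (isIntegral_star hz)

end QuadraticAlgebra

variable {d : ℤ}

lemma exists_intCast_re_im_of_isIntegral (hd : Squarefree d) (hd₁ : d % 4 ≠ 1)
    {z : QuadraticAlgebra ℚ (d : ℚ) 0} (hz : IsIntegral ℤ z) :
    ∃ a b : ℤ, z.re = a ∧ z.im = b := by
  obtain ⟨s, hs⟩ := IsIntegrallyClosed.isIntegral_iff.1 (isIntegral_quadraticAlgebra_trace hz)
  obtain ⟨n, hn⟩ := IsIntegrallyClosed.isIntegral_iff.1 (isIntegral_quadraticAlgebra_norm hz)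
  simp only [eq_intCast, QuadraticAlgebra.trace_def, QuadraticAlgebra.norm_def] at hs hn
  obtain ⟨y, hy⟩ : IsLocalization.IsInteger ℤ (2 * z.im) :=
    isInteger_of_squarefree_of_isInteger_mul_sq hd
      ⟨s ^ 2 - 4 * n, by push_cast [eq_intCast]; rw [hs, hn]; ring⟩
  rw [eq_intCast] at hy
  have hfour : s ^ 2 - d * y ^ 2 = 4 * n := by
    have : (s : ℚ) ^ 2 - d * y ^ 2 = 4 * n := by rw [hs, hy, hn]; ring
    exact_mod_cast this
  have hd₀ : ¬ 4 ∣ d := fun h ↦ by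
    simpa [Int.isUnit_iff] using hd 2 h
  obtain ⟨⟨a, rfl⟩, ⟨b, rfl⟩⟩ :=
    even_and_even_of_four_dvd_sq_sub_mul_sq hd₀ hd₁ (Dvd.intro n hfour.symm)
  push_cast at hs hy
  exact ⟨a, b, by linarith, by linarith⟩

lemma sqrtC_mem_Qsqrt (d : ℤ) : sqrtC d ∈ Qsqrt d :=
  IntermediateField.mem_adjoin_simple_self ℚ (sqrtC d)

lemma exists_eq_add_mul_sqrtC_of_isIntegral (hd : Squarefree d) (hd₁ : d % 4 ≠ 1) {z : ℂ}
    (hz : z ∈ Qsqrt d) (hz_int : IsIntegral ℤ z) : ∃ a b : ℤ, z = a + b * sqrtC d := by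
  have : Fact (∀ r : ℚ, r ^ 2 ≠ d + 0 * r) := ⟨fun r hr ↦
    not_isSquare_of_squarefree hd (by rintro rfl; simp at hd₁)
      (Rat.isSquare_intCast_iff.1 ⟨r, by linarith⟩)⟩
  let φ : QuadraticAlgebra ℚ (d : ℚ) 0 →ₐ[ℚ] ℂ :=
    QuadraticAlgebra.lift ⟨sqrtC d, by simp [← sq, sqrtC_sq, Algebra.smul_def]⟩
  have hle : Qsqrt d ≤ φ.fieldRange :=
    IntermediateField.adjoin_simple_le_iff.2 ⟨QuadraticAlgebra.omega, by simp [φ]⟩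
  obtain ⟨w, rfl⟩ := hle hz
  have hw : IsIntegral ℤ w :=
    (isIntegral_algHom_iff (φ.restrictScalars ℤ) φ.injective).1 hz_int
  obtain ⟨a, b, ha, hb⟩ := exists_intCast_re_im_of_isIntegral hd hd₁ hw
  exact ⟨a, b, by simp [φ, ha, hb, Algebra.smul_def]⟩

/-- The square root `√d` as an algebraic integer of `ℚ(√d)`. -/
noncomputable def integralSqrt (d : ℤ) : 𝓞 (Qsqrt d) :=
  ⟨⟨sqrtC d, sqrtC_mem_Qsqrt d⟩,
    (isIntegral_algHom_iff ((Qsqrt d).val.restrictScalars ℤ) Subtype.val_injective).1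
      (.of_pow two_pos ((sqrtC_sq d).symm ▸ isIntegral_algebraMap (x := d)))⟩

lemma coe_integralSqrt (d : ℤ) : ((integralSqrt d : Qsqrt d) : ℂ) = sqrtC d := rfl

lemma integralSqrt_mul_self (d : ℤ) : integralSqrt d * integralSqrt d = d :=
  RingOfIntegers.ext (Subtype.ext (by simp [coe_integralSqrt, ← sq, sqrtC_sq]))

/-- The inclusion of `ℤ[√d]` into the ring of integers of `ℚ(√d)`. -/
noncomputable def zsqrtdToRingOfIntegers (d : ℤ) : ℤ√d →+* 𝓞 (Qsqrt d) :=
  Zsqrtd.lift ⟨integralSqrt d, integralSqrt_mul_self d⟩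

lemma coe_zsqrtdToRingOfIntegers (w : ℤ√d) :
    ((zsqrtdToRingOfIntegers d w : Qsqrt d) : ℂ) = w.re + w.im * sqrtC d := by
  simp [zsqrtdToRingOfIntegers, coe_integralSqrt]

lemma zsqrtdToRingOfIntegers_injective (hd : ¬ IsSquare d) :
    Function.Injective (zsqrtdToRingOfIntegers d) :=
  Zsqrtd.lift_injective _ fun n hn ↦ hd ⟨n, hn⟩

lemma zsqrtdToRingOfIntegers_surjective (hd : Squarefree d) (hd₁ : d % 4 ≠ 1) :
    Function.Surjective (zsqrtdToRingOfIntegers d) := fun x ↦ by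
  obtain ⟨a, b, hab⟩ := exists_eq_add_mul_sqrtC_of_isIntegral hd hd₁ (x : Qsqrt d).2
    (x.isIntegral_coe.map (Qsqrt d).val.toRingHom.toIntAlgHom)
  refine ⟨⟨a, b⟩, RingOfIntegers.ext (Subtype.ext ?_)⟩
  rw [coe_zsqrtdToRingOfIntegers, hab]

end IntegerRing

lemma exists_classGroup_orderOf_eq_of_norm_eq_pow {d : ℤ} (hd : d ≤ 0) (hsf : Squarefree d)
    (hd₁ : d % 4 ≠ 1) {z : ℤ√d} (hz : IsUnit z.im) (hlt : z.norm < d ^ 2)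
    (hcop : IsCoprime z.norm (2 * z.re)) {c : ℤ} {t : ℕ} (ht : t ≠ 0) (hnorm : z.norm = c ^ t) :
    ∃ x : ClassGroup (𝓞 (Qsqrt d)), orderOf x = t := by
  have hd_sq : ¬ IsSquare d := not_isSquare_of_squarefree hsf (by rintro rfl; simp at hd₁)
  let e : ℤ√d ≃+* 𝓞 (Qsqrt d) := RingEquiv.ofBijective (zsqrtdToRingOfIntegers d)
    ⟨zsqrtdToRingOfIntegers_injective hd_sq, zsqrtdToRingOfIntegers_surjective hsf hd₁⟩
  have hz₀ : z ≠ 0 := by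
    rintro rfl
    exact not_isUnit_zero hz
  have hmul : z * star z = (c : ℤ√d) ^ t := by
    rw [← Zsqrtd.norm_eq_mul_conj, hnorm, Int.cast_pow]
  refine exists_classGroup_orderOf_eq_of_mul_eq_pow (α := e z) (β := e (star z)) (c := e c) ht
    (e.map_ne_zero_iff.2 hz₀) ((isCoprime_star_of_isCoprime_norm_two_mul_re hcop).map e.toRingHom)
    (by rw [← map_mul, hmul, map_pow]) fun p hp _ γ hγ ↦ ?_
  refine not_associated_pow_of_norm_lt_sq hd hz hlt hp.two_le (e.symm γ) ?_
  simpa using hγ.map e.symm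

theorem dvd_classNumber_of_squarefree_t_general (m : ℤ) (hm : 1 < m) (hmodd : Odd m) (t : ℕ)
    (ht : t ≠ 0) (hsf : Squarefree (2 * m ^ t - 1)) :
    t ∣ NumberField.classNumber (Qsqrt (1 - 2 * m ^ t)) := by
  have hM : 1 < m ^ t := one_lt_pow₀ hm ht
  have hModd : Odd (m ^ t) := hmodd.pow
  have hsf' : Squarefree (1 - 2 * m ^ t) :=
    hsf.squarefree_of_dvd (by rw [← neg_sub, neg_dvd])
  have hmod : (1 - 2 * m ^ t) % 4 ≠ 1 := by
    obtain ⟨k, hk⟩ := hModd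
    lia
  let z : ℤ√(1 - 2 * m ^ t) := ⟨1 - m ^ t, 1⟩
  have hnorm : z.norm = (m ^ t) ^ 2 := by simp only [z, Zsqrtd.norm_def]; ring
  have hcop : IsCoprime z.norm (2 * z.re) := by
    rw [hnorm]
    exact ((Int.isCoprime_two_right.2 hModd).mul_right ⟨1, 1, by ring⟩).pow_left
  obtain ⟨x, hx⟩ := exists_classGroup_orderOf_eq_of_norm_eq_pow (z := z) (c := m ^ 2) (by lia)
    hsf' hmod isUnit_one (by rw [hnorm]; nlinarith) hcop ht (by rw [hnorm]; ring)
  exact hx.symm.dvd.trans orderOf_dvd_card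

/-- If `m ≥ 3` and `t ≥ 3` are odd integers and `2 m ^ t - 1` is square-free, then every prime
`p ∣ t` divides the class number of `ℚ(√(1 - 2 m ^ t))`; in particular if moreover `t` is
square-free then `t` divides this class number. -/
theorem dvd_classNumber_of_squarefree_t
    (m : ℤ) (hm : 3 ≤ m) (hmodd : Odd m)
    (t : ℕ) (ht3 : 3 ≤ t) (htodd : Odd t)
    (hsf : Squarefree (2 * m ^ t - 1)) :
    (∀ p : ℕ, p.Prime → p ∣ t →
      p ∣ NumberField.classNumber (Qsqrt (1 - 2 * m ^ t))) ∧
    (Squarefree t → t ∣ NumberField.classNumber (Qsqrt (1 - 2 * m ^ t))) := by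
  have h := dvd_classNumber_of_squarefree_t_general m (by lia) hmodd t (by lia) hsf
  exact ⟨fun _ _ hpt ↦ hpt.trans h, fun _ ↦ h⟩
end
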